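/- arXiv:2002.10166 — 3 statements merged into one kernel-verified Lean document; each statement's English description precedes it below -/
import Mathlib

section
/- Let (X, f) be an asymmetric normed space, nontrivial, with c(X) := sInf {f (-x) : x ∈ X, f x = 1} > 0, and let (Y, g) be any asymmetric normed space; equip X and Y with the real normed space structures of their associated norms. Then every continuous linear map T : X →L[ℝ] Y (for the associated norms) belongs to L_c(X, Y), i.e., there exists C ≥ 0 with g (T x) ≤ C * f x for all x. Consequently L_c(X, Y) coincides with the space of all continuous linear maps X →L[ℝ] Y and is a vector space. -/
/-! Normalizing `-x` shows `c * f (-x) ≤ f x` for every `x`, where `c > 0` is the index of symmetry.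
Hence `‖x‖ = max (f x) (f (-x)) ≤ (1 + c⁻¹) * f x`, and
`g (T x) ≤ ‖T x‖ ≤ ‖T‖ * ‖x‖` gives the bound with `C = ‖T‖ * (1 + c⁻¹)`. -/

/-- `f` is an asymmetric norm on the real vector space `X`. -/
def IsAsymmNorm {X : Type*} [AddCommGroup X] [Module ℝ X] (f : X → ℝ) : Prop :=
  (∀ x, 0 ≤ f x) ∧ (∀ (c : ℝ), 0 ≤ c → ∀ x, f (c • x) = c * f x) ∧
  (∀ x y, f (x + y) ≤ f x + f y) ∧ (∀ x, f x = 0 → f (-x) = 0 → x = 0)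

/-- The infimum defining the index is tested at `-x / f (-x)`; the case `f (-x) = 0` is trivial. -/
lemma index_mul_le {X : Type*} [AddCommGroup X] [Module ℝ X] {f : X → ℝ} (hf : IsAsymmNorm f)
    (x : X) : sInf ((fun x => f (-x)) '' {x | f x = 1}) * f (-x) ≤ f x := by
  obtain ⟨h0, hsmul, -, -⟩ := hf
  rcases (h0 (-x)).eq_or_lt with h | h
  · rw [← h, mul_zero]
    exact h0 x
  · have hbdd : BddBelow ((fun x => f (-x)) '' {x | f x = 1}) := by
      refine ⟨0, ?_⟩
      rintro _ ⟨y, -, rfl⟩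
      exact h0 _
    have hle : sInf ((fun x => f (-x)) '' {x | f x = 1}) ≤ (f (-x))⁻¹ * f x := by
      refine csInf_le hbdd ⟨(f (-x))⁻¹ • (-x), ?_, ?_⟩
      · rw [Set.mem_ofPred_eq, hsmul _ (inv_nonneg.2 h.le), inv_mul_cancel₀ h.ne']
      · simp only [smul_neg, neg_neg]
        exact hsmul _ (inv_nonneg.2 h.le) x
    rwa [inv_mul_eq_div, le_div_iff₀ h] at hle

/-- If `c(X) > 0`, then every continuous linear map `T : X →L[ℝ] Y` (for the associated
norms) belongs to `L_c(X,Y)`, so `L_c(X,Y)` is the whole vector space `X →L[ℝ] Y`. -/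
theorem mem_Lc_of_index_pos
    {X Y : Type*} [NormedAddCommGroup X] [NormedSpace ℝ X] [Nontrivial X]
    [NormedAddCommGroup Y] [NormedSpace ℝ Y]
    (f : X → ℝ) (g : Y → ℝ) (hf : IsAsymmNorm f) (hg : IsAsymmNorm g)
    (hXnorm : ∀ x : X, ‖x‖ = max (f x) (f (-x)))
    (hYnorm : ∀ y : Y, ‖y‖ = max (g y) (g (-y)))
    (hc : 0 < sInf ((fun x => f (-x)) '' {x | f x = 1})) :
    ∀ T : X →L[ℝ] Y, ∃ C ≥ (0 : ℝ), ∀ x, g (T x) ≤ C * f x := by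
  intro T
  set c := sInf ((fun x => f (-x)) '' {x | f x = 1})
  refine ⟨‖T‖ * (1 + c⁻¹), by positivity, fun x => ?_⟩
  have hx0 : 0 ≤ f x := hf.1 x
  have hneg : f (-x) ≤ c⁻¹ * f x := by
    rw [inv_mul_eq_div, le_div_iff₀ hc, mul_comm]
    exact index_mul_le hf x
  have hnorm : ‖x‖ ≤ (1 + c⁻¹) * f x := by
    have : 0 ≤ c⁻¹ * f x := by positivity
    rw [hXnorm]
    exact max_le (by linarith) (by linarith)
  calc g (T x) ≤ ‖T x‖ := hYnorm (T x) ▸ le_max_left _ _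
    _ ≤ ‖T‖ * ‖x‖ := T.le_opNorm x
    _ ≤ ‖T‖ * ((1 + c⁻¹) * f x) := by gcongr
    _ = ‖T‖ * (1 + c⁻¹) * f x := by ring
end

section
/- Let (X, f) be an asymmetric normed space and (Y, g) an asymmetric normed space with Y finite-dimensional, each carrying the real normed space structure of its associated norm. Then there exists a continuous linear map T : X →L[ℝ] Y with (∃ C ≥ 0, ∀ x, g (T x) ≤ C * f x) but ¬ (∃ C ≥ 0, ∀ x, g (-(T x)) ≤ C * f x) if and only if c(X) = 0 and c(Y) = 0 (i.e., for every ε > 0 there exists x ∈ X with f x = 1 and f (-x) < ε, and there exists y ∈ Y with g y = 1 and g (-y) < ε). -/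
section AsymmNorm

variable {X : Type*} [NormedAddCommGroup X] [NormedSpace ℝ X] {f : X → ℝ}

/-- If `c(X) > 0`, then `f` and `x ↦ f (-x)` are equivalent. -/
lemma neg_le_of_index_pos (hf : IsAsymmNorm f)
    (h : ¬ ∀ ε > (0 : ℝ), ∃ x : X, f x = 1 ∧ f (-x) < ε) :
    ∃ K ≥ (0 : ℝ), ∀ x, f (-x) ≤ K * f x := by
  obtain ⟨h0, hs, -, -⟩ := hf
  push Not at h
  obtain ⟨ε, hε, h⟩ := h
  refine ⟨ε⁻¹, by positivity, fun x => ?_⟩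
  rcases (h0 (-x)).eq_or_lt with hx | hx
  · rw [← hx]
    have := h0 x
    positivity
  · have h1 := h ((f (-x))⁻¹ • (-x)) (by
      rw [hs _ (by positivity), inv_mul_cancel₀ hx.ne'])
    rw [← smul_neg, neg_neg, hs _ (by positivity), inv_mul_eq_div, le_div_iff₀ hx] at h1
    rw [inv_mul_eq_div, le_div_iff₀ hε]
    linarith

lemma apply_le_norm {X : Type*} [NormedAddCommGroup X] {f : X → ℝ}
    (hn : ∀ x : X, ‖x‖ = max (f x) (f (-x))) (x : X) : f x ≤ ‖x‖ := by
  rw [hn]; exact le_max_left _ _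

lemma continuous_asymm (hf : IsAsymmNorm f) (hn : ∀ x : X, ‖x‖ = max (f x) (f (-x))) :
    Continuous f := by
  obtain ⟨-, -, ha, -⟩ := hf
  have key : ∀ x y, f x - f y ≤ ‖x - y‖ := fun x y => by
    have h1 := ha (x - y) y
    rw [sub_add_cancel] at h1
    linarith [apply_le_norm hn (x - y)]
  refine (LipschitzWith.of_dist_le_mul (K := 1) fun x y => ?_).continuous
  rw [Real.dist_eq, dist_eq_norm, NNReal.coe_one, one_mul, abs_le]
  have := key y x
  rw [norm_sub_rev] at this
  exact ⟨by linarith, key x y⟩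

lemma exists_attained [FiniteDimensional ℝ X] (hf : IsAsymmNorm f)
    (hn : ∀ x : X, ‖x‖ = max (f x) (f (-x)))
    (h : ∀ ε > (0 : ℝ), ∃ x : X, f x = 1 ∧ f (-x) < ε) :
    ∃ y, f y = 1 ∧ f (-y) = 0 := by
  have hc := continuous_asymm hf hn
  have : ProperSpace X := FiniteDimensional.proper ℝ X
  have hcomp : IsCompact (Metric.closedBall (0 : X) 1 ∩ {y | f y = 1}) :=
    (isCompact_closedBall _ _).inter_right (isClosed_eq hc continuous_const)
  have hmem : ∀ ε > (0 : ℝ), ε ≤ 1 →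
      ∃ x ∈ Metric.closedBall (0 : X) 1 ∩ {y | f y = 1}, f (-x) < ε := by
    intro ε hε h1
    obtain ⟨x, hx, hx'⟩ := h ε hε
    refine ⟨x, ⟨?_, hx⟩, hx'⟩
    rw [mem_closedBall_zero_iff, hn, hx]
    exact max_le le_rfl (by linarith)
  obtain ⟨x₀, hx₀, -⟩ := hmem 1 one_pos le_rfl
  obtain ⟨y, hy, hmin⟩ := hcomp.exists_isMinOn ⟨x₀, hx₀⟩
    (hc.comp continuous_neg).continuousOn
  refine ⟨y, hy.2, le_antisymm (not_lt.1 fun hpos => ?_) (hf.1 _)⟩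
  obtain ⟨z, hz, hz'⟩ := hmem (min (f (-y)) 1) (lt_min hpos one_pos) (min_le_right _ _)
  have h1 : f (-y) ≤ f (-z) := hmin hz
  linarith [min_le_left (f (-y)) 1]

/-- Hahn–Banach: a point with `f x = 1` is normed by a functional dominated by `f`. -/
lemma exists_norming (hf : IsAsymmNorm f) (hn : ∀ x : X, ‖x‖ = max (f x) (f (-x)))
    {x : X} (hx : f x = 1) :
    ∃ φ : X →L[ℝ] ℝ, (∀ z, φ z ≤ f z) ∧ φ x = 1 ∧ ‖φ‖ ≤ 1 := by
  obtain ⟨h0, hs, ha, -⟩ := hf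
  have hx0 : x ≠ 0 := by
    rintro rfl
    have := hs 0 le_rfl 0
    rw [zero_smul, zero_mul] at this
    linarith
  obtain ⟨φ, h1, h2⟩ := exists_extension_of_le_sublinear
    (LinearPMap.mkSpanSingleton (K := ℝ) x (1 : ℝ) hx0) f (fun c hc z => hs c hc.le z) ha (by
      rintro ⟨z, hz⟩
      obtain ⟨c, rfl⟩ := Submodule.mem_span_singleton.1 hz
      refine (LinearPMap.mkSpanSingleton'_apply x (1 : ℝ) _ c hz).trans_le ?_
      rcases le_total 0 c with hc | hc
      · simp [hs c hc, hx]
      · have := h0 (c • x)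
        simp only [smul_eq_mul, mul_one, RingHom.id_apply]
        linarith)
  have hbound : ∀ z, ‖φ z‖ ≤ 1 * ‖z‖ := fun z => by
    rw [Real.norm_eq_abs, one_mul, abs_le]
    have h3 := h2 (-z)
    have h4 := apply_le_norm hn (-z)
    rw [map_neg] at h3
    rw [norm_neg] at h4
    exact ⟨by linarith, (h2 z).trans (apply_le_norm hn z)⟩
  refine ⟨φ.mkContinuous 1 hbound, h2, ?_, φ.mkContinuous_norm_le zero_le_one hbound⟩
  have h5 := h1 ⟨x, Submodule.mem_span_singleton_self x⟩
  exact h5.trans (LinearPMap.mkSpanSingleton_apply ..)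

/-- If `c(X) = 0`, some functional `φ ≤ 2 f` has `-φ` bounded by no multiple of `f`. -/
lemma exists_functional (hf : IsAsymmNorm f) (hn : ∀ x : X, ‖x‖ = max (f x) (f (-x)))
    (h : ∀ ε > (0 : ℝ), ∃ x : X, f x = 1 ∧ f (-x) < ε) :
    ∃ φ : X →L[ℝ] ℝ, (∀ z, φ z ≤ 2 * f z) ∧
      ¬ ∃ C ≥ (0 : ℝ), ∀ z, -φ z ≤ C * f z := by
  choose x hx hx' using fun n : ℕ => h ((1 / 4 : ℝ) ^ n) (by positivity)
  choose φ hφ hφx hφn using fun n => exists_norming hf hn (hx n)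
  have hgeo : HasSum (fun n : ℕ => (1 / 2 : ℝ) ^ n) 2 := hasSum_geometric_two
  have hsum : Summable fun n => (1 / 2 : ℝ) ^ n • φ n := by
    refine Summable.of_norm_bounded hgeo.summable fun n => ?_
    rw [norm_smul, norm_pow, Real.norm_of_nonneg (by norm_num : (0 : ℝ) ≤ 1 / 2)]
    exact mul_le_of_le_one_right (by positivity) (hφn n)
  obtain ⟨Φ, hΦ⟩ := hsum
  have hΦz : ∀ z, HasSum (fun n => (1 / 2 : ℝ) ^ n * φ n z) (Φ z) := fun z =>
    hΦ.mapL (ContinuousLinearMap.apply ℝ ℝ z)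
  refine ⟨Φ, fun z => hasSum_le (fun n => ?_) (hΦz z) (hgeo.mul_right (f z)), ?_⟩
  · exact mul_le_mul_of_nonneg_left (hφ n z) (by positivity)
  rintro ⟨C, hC, hb⟩
  have key : ∀ n, (2 : ℝ) ^ n ≤ C + 2 := fun n => by
    -- every term of `∑ 2⁻ᵐ (φ m (x n) + f (-x n))` is nonnegative, so the sum dominates its `n`-th term
    have h1 := le_hasSum ((hΦz (x n)).add (hgeo.mul_right (f (-x n)))) n (fun m _ => by
      have h2 := hφ m (-x n)
      rw [map_neg] at h2
      rw [← mul_add]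
      exact mul_nonneg (by positivity) (by linarith))
    simp only [hφx, mul_one] at h1
    have h3 := hb (-x n)
    rw [map_neg, neg_neg] at h3
    have h4 : 0 ≤ (1 / 2 : ℝ) ^ n * f (-x n) := mul_nonneg (by positivity) (hf.1 _)
    have h5 : (1 / 2 : ℝ) ^ n ≤ (C + 2) * (1 / 4) ^ n := by
      have := mul_le_mul_of_nonneg_left (hx' n).le (by linarith : 0 ≤ C + 2)
      linarith
    have h6 : (1 / 2 : ℝ) ^ n * 4 ^ n = 2 ^ n := by rw [← mul_pow]; norm_num
    have h7 : (1 / 4 : ℝ) ^ n * 4 ^ n = 1 := by rw [← mul_pow]; norm_num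
    have h8 := mul_le_mul_of_nonneg_right h5 (by positivity : (0 : ℝ) ≤ 4 ^ n)
    rwa [h6, mul_assoc, h7, mul_one] at h8
  obtain ⟨n, hlt⟩ := pow_unbounded_of_one_lt (C + 2) (one_lt_two : (1 : ℝ) < 2)
  exact absurd (key n) (not_le.2 hlt)

end AsymmNorm

/-- For `Y` finite-dimensional: `L_c(X,Y)` is not a vector space (some `T ∈ L_c(X,Y)`
has `-T ∉ L_c(X,Y)`) iff `c(X) = 0` and `c(Y) = 0`. -/
theorem Lc_not_vector_space_iff_indices_zero
    {X Y : Type*} [NormedAddCommGroup X] [NormedSpace ℝ X]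
    [NormedAddCommGroup Y] [NormedSpace ℝ Y] [FiniteDimensional ℝ Y]
    (f : X → ℝ) (g : Y → ℝ) (hf : IsAsymmNorm f) (hg : IsAsymmNorm g)
    (hXnorm : ∀ x : X, ‖x‖ = max (f x) (f (-x)))
    (hYnorm : ∀ y : Y, ‖y‖ = max (g y) (g (-y))) :
    (∃ T : X →L[ℝ] Y, (∃ C ≥ (0 : ℝ), ∀ x, g (T x) ≤ C * f x) ∧
        ¬ (∃ C ≥ (0 : ℝ), ∀ x, g (-(T x)) ≤ C * f x)) ↔
    ((∀ ε > (0 : ℝ), ∃ x : X, f x = 1 ∧ f (-x) < ε) ∧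
     (∀ ε > (0 : ℝ), ∃ y : Y, g y = 1 ∧ g (-y) < ε)) := by
  constructor
  · rintro ⟨T, ⟨C, hC, hT⟩, hneg⟩
    constructor
    · by_contra hc
      obtain ⟨K, hK, hKf⟩ := neg_le_of_index_pos hf hc
      refine hneg ⟨C * K, by positivity, fun x => ?_⟩
      rw [← map_neg, mul_assoc]
      exact (hT (-x)).trans (mul_le_mul_of_nonneg_left (hKf x) hC)
    · by_contra hc
      obtain ⟨K, hK, hKg⟩ := neg_le_of_index_pos hg hc
      refine hneg ⟨K * C, by positivity, fun x => ?_⟩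
      rw [mul_assoc]
      exact (hKg (T x)).trans (mul_le_mul_of_nonneg_left (hT x) hK)
  · rintro ⟨hX, hY⟩
    obtain ⟨y, hy, hy'⟩ := exists_attained hg hYnorm hY
    obtain ⟨φ, hφ, hnot⟩ := exists_functional hf hXnorm hX
    obtain ⟨h0, hs, -, -⟩ := hg
    refine ⟨φ.smulRight y, ⟨2, by norm_num, fun x => ?_⟩, ?_⟩
    · rw [ContinuousLinearMap.smulRight_apply]
      rcases le_total 0 (φ x) with hx | hx
      · rw [hs _ hx, hy, mul_one]
        exact hφ x
      · rw [← neg_smul_neg, hs _ (neg_nonneg.2 hx), hy', mul_zero]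
        have := hf.1 x
        positivity
    · rintro ⟨C, hC, hb⟩
      refine hnot ⟨C, hC, fun x => le_trans ?_ (hb x)⟩
      rw [ContinuousLinearMap.smulRight_apply, ← neg_smul]
      rcases le_total 0 (-φ x) with hx | hx
      · rw [hs _ hx, hy, mul_one]
      · exact hx.trans (h0 _)
end

section
/- Let (X, f) and (Y, g) be asymmetric normed spaces, each carrying the real normed space structure of its associated norm, with Y a complete normed space. Assume c(X) = 0 (for every ε > 0 there exists x with f x = 1 and f (-x) < ε) and that there exists e ∈ Y with g e = 1 and g (-e) = 0. Then for every continuous linear H : X →L[ℝ] Y with (∃ C ≥ 0, ∀ x, g (H x) ≤ C * f x) and every ε > 0, there exists T : X →L[ℝ] Y with (∀ x, g (T x) ≤ ε * f x) such that H + T belongs to L_c(X, Y) but -(H + T) does not: ¬ ∃ C ≥ 0, ∀ x, g (-(H x + T x)) ≤ C * f x. -/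
/-- Hahn-Banach: a continuous functional below `f` that supports `f` at `x`. -/
lemma exists_supporting_functional {X : Type*} [NormedAddCommGroup X] [NormedSpace ℝ X]
    (f : X → ℝ) (hf : IsAsymmNorm f) (hXnorm : ∀ x : X, ‖x‖ = max (f x) (f (-x)))
    (x : X) (hx : f x = 1) :
    ∃ φ : X →L[ℝ] ℝ, φ x = 1 ∧ (∀ y, φ y ≤ f y) ∧ ‖φ‖ ≤ 1 := by
  obtain ⟨h0, hsmul, hadd, -⟩ := hf
  have hx0 : x ≠ 0 := by
    rintro rfl
    have := hsmul 0 le_rfl (0 : X)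
    simp [hx] at this
  obtain ⟨φ, hφ, hle⟩ := exists_extension_of_le_sublinear
    (LinearPMap.mkSpanSingleton x (1 : ℝ) hx0) f
    (fun c hc y => hsmul c hc.le y) hadd (by
      rintro ⟨y, hy⟩
      obtain ⟨c, rfl⟩ := Submodule.mem_span_singleton.1 hy
      rw [LinearPMap.mkSpanSingleton'_apply]
      rcases le_total 0 c with hc | hc
      · simp [hsmul c hc, hx]
      · exact le_trans (by simpa using hc) (h0 _))
  have hbound : ∀ y, ‖φ y‖ ≤ 1 * ‖y‖ := by
    intro y
    rw [one_mul, hXnorm, Real.norm_eq_abs, abs_le']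
    exact ⟨(hle y).trans (le_max_left _ _),
      by simpa using (hle (-y)).trans (le_max_right (f y) _)⟩
  refine ⟨φ.mkContinuous 1 hbound, ?_, fun y => by simpa using hle y,
    LinearMap.mkContinuous_norm_le _ zero_le_one _⟩
  have h1 := hφ ⟨x, Submodule.mem_span_singleton_self x⟩
  exact h1.trans (LinearPMap.mkSpanSingleton_apply ℝ ℝ hx0 (1 : ℝ))

/-- A functional `φ ≤ f` whose negative is not dominated by any multiple of `f`. -/
lemma exists_non_negatable_functional {X : Type*} [NormedAddCommGroup X] [NormedSpace ℝ X]
    (f : X → ℝ) (hf : IsAsymmNorm f) (hXnorm : ∀ x : X, ‖x‖ = max (f x) (f (-x)))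
    (hcX : ∀ ε > (0 : ℝ), ∃ x : X, f x = 1 ∧ f (-x) < ε) :
    ∃ φ : X →L[ℝ] ℝ, (∀ y, φ y ≤ f y) ∧ ¬ ∃ C : ℝ, ∀ y, -φ y ≤ C * f y := by
  set w : ℕ → ℝ := fun n => 1 / 2 / 2 ^ n with hw
  have hwpos : ∀ n, 0 < w n := fun n => by positivity
  have hwsum : HasSum w 1 := hasSum_geometric_two' 1
  choose x hx1 hx2 using fun n : ℕ => hcX (w n / (n + 1)) (by have := hwpos n; positivity)
  choose φ hφx hφle hφn using fun n => exists_supporting_functional f hf hXnorm (x n) (hx1 n)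
  have hsum : Summable fun n => w n • φ n := by
    refine Summable.of_norm_bounded hwsum.summable fun n => ?_
    rw [norm_smul, Real.norm_of_nonneg (hwpos n).le]
    exact mul_le_of_le_one_right (hwpos n).le (hφn n)
  have happ : ∀ y, HasSum (fun n => w n * φ n y) ((∑' n, w n • φ n) y) := fun y => by
    simpa using hsum.hasSum.mapL (ContinuousLinearMap.apply ℝ ℝ y)
  refine ⟨∑' n, w n • φ n, fun y => ?_, ?_⟩
  · have := hasSum_le (fun n => mul_le_mul_of_nonneg_left (hφle n y) (hwpos n).le)
      (happ y) (hwsum.mul_right (f y))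
    simpa using this
  · rintro ⟨C, hC⟩
    obtain ⟨n, hn⟩ := exists_nat_gt C
    have hCn := hC (-x n)
    rw [map_neg, neg_neg] at hCn
    have hnn := hf.1 (-x n)
    have hs := (happ (x n)).add (hwsum.mul_right (f (-x n)))
    have hterm : ∀ k, 0 ≤ w k * φ k (x n) + w k * f (-x n) := fun k => by
      have h := hφle k (-x n)
      rw [map_neg] at h
      rw [← mul_add]
      exact mul_nonneg (hwpos k).le (by linarith)
    have hge := le_hasSum hs n fun k _ => hterm k
    rw [hφx] at hge
    have hlt := hx2 n
    rw [lt_div_iff₀ (by positivity)] at hlt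
    nlinarith [mul_nonneg (hwpos n).le hnn, mul_nonneg (sub_nonneg.2 hn.le) hnn]

/-- If `c(X) = 0` and `Y` is a biBanach asymmetric space which is not T1, then the
set of `H ∈ L_c(X,Y)` with `-H ∉ L_c(X,Y)` is dense in `L_c(X,Y)` for the asymmetric
operator norm: for every `H ∈ L_c(X,Y)` and `ε > 0` there is `T` with
`g (T x) ≤ ε * f x` for all `x`, `H + T ∈ L_c(X,Y)` and `-(H + T) ∉ L_c(X,Y)`. -/
theorem dense_non_negatable_in_Lc
    {X Y : Type*} [NormedAddCommGroup X] [NormedSpace ℝ X]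
    [NormedAddCommGroup Y] [NormedSpace ℝ Y] [CompleteSpace Y]
    (f : X → ℝ) (g : Y → ℝ) (hf : IsAsymmNorm f) (hg : IsAsymmNorm g)
    (hXnorm : ∀ x : X, ‖x‖ = max (f x) (f (-x)))
    (hYnorm : ∀ y : Y, ‖y‖ = max (g y) (g (-y)))
    (hcX : ∀ ε > (0 : ℝ), ∃ x : X, f x = 1 ∧ f (-x) < ε)
    (e : Y) (he : g e = 1) (he' : g (-e) = 0) :
    ∀ H : X →L[ℝ] Y, (∃ C ≥ (0 : ℝ), ∀ x, g (H x) ≤ C * f x) →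
      ∀ ε > (0 : ℝ), ∃ T : X →L[ℝ] Y,
        (∀ x, g (T x) ≤ ε * f x) ∧
        (∃ C ≥ (0 : ℝ), ∀ x, g (H x + T x) ≤ C * f x) ∧
        ¬ (∃ C ≥ (0 : ℝ), ∀ x, g (-(H x + T x)) ≤ C * f x) := by
  intro H ⟨D, hD0, hD⟩ ε hε
  obtain ⟨φ, hφle, hφ⟩ := exists_non_negatable_functional f hf hXnorm hcX
  obtain ⟨g0, gsmul, gadd, -⟩ := hg
  have hge_nonneg : ∀ t : ℝ, 0 ≤ t → g (t • e) = t := fun t ht => by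
    rw [gsmul t ht, he, mul_one]
  have hge_nonpos : ∀ t : ℝ, t ≤ 0 → g (t • e) = 0 := fun t ht => by
    rw [← neg_smul_neg, gsmul (-t) (by linarith), he', mul_zero]
  have hge : ∀ t : ℝ, t ≤ g (t • e) := fun t => by
    rcases le_total 0 t with ht | ht
    · exact (hge_nonneg t ht).ge
    · exact ht.trans (g0 _)
  have hT : ∀ x, g ((ε * φ x) • e) ≤ ε * f x := fun x => by
    rcases le_total 0 (ε * φ x) with ht | ht
    · rw [hge_nonneg _ ht]
      exact mul_le_mul_of_nonneg_left (hφle x) hε.le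
    · rw [hge_nonpos _ ht]
      exact mul_nonneg hε.le (hf.1 x)
  have hTx : ∀ x, ((ε • φ).smulRight e) x = (ε * φ x) • e := fun x => by simp
  refine ⟨(ε • φ).smulRight e, fun x => ?_, ⟨D + ε, by positivity, fun x => ?_⟩, ?_⟩
  · rw [hTx]
    exact hT x
  · rw [hTx, add_mul]
    exact (gadd _ _).trans (add_le_add (hD x) (hT x))
  · rintro ⟨C, -, hC⟩
    refine hφ ⟨(C + D) / ε, fun x => ?_⟩
    have h1 := hC x
    rw [hTx] at h1
    have h2 := gadd (-(H x + (ε * φ x) • e)) (H x)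
    rw [show -(H x + (ε * φ x) • e) + H x = (-(ε * φ x)) • e by rw [neg_smul]; abel] at h2
    have h3 := hge (-(ε * φ x))
    have h4 := hD x
    rw [div_mul_eq_mul_div, le_div_iff₀ hε]
    linarith
end
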